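/- arXiv:1203.6869 — 2 statements merged into one kernel-verified Lean document; each statement's English description precedes it below -/
import Mathlib

section
/- For all ψ, α ∈ ℝ with cos(ψ/2) ≠ 0, the element r(ψ,α) = ½(P_a ⊗ J^a + J^a ⊗ P_a) + ½ tan(ψ/2)(P₁ ∧ J₂ − P₂ ∧ J₁) + (α / (4 cos²(ψ/2))) P₁ ∧ P₂ of iso(2,1) ⊗ iso(2,1) is invariant under the Cartan subalgebra 𝔥₁ = span{J₀, P₀}: for every x ∈ 𝔥₁, (ad_x ⊗ id + id ⊗ ad_x)(r(ψ,α)) = 0. -/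
noncomputable section

open scoped TensorProduct

/-- The ambient associative algebra: real 4×4 matrices.  `iso(2,1)` is realized inside it
via the standard affine embedding `x ↦ [[u, a], [0, 0]]`, and the Lie bracket is the
matrix commutator `⁅x, y⁆ = x * y - y * x`. -/
abbrev G : Type := Matrix (Fin 4) (Fin 4) ℝ

/-- The totally antisymmetric tensor in three dimensions with `eps 0 1 2 = 1`. -/
def eps (a b c : Fin 3) : ℝ :=
  ((((b : ℕ) : ℝ) - ((a : ℕ) : ℝ)) * (((c : ℕ) : ℝ) - ((a : ℕ) : ℝ)) *
    (((c : ℕ) : ℝ) - ((b : ℕ) : ℝ))) / 2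

/-- The Minkowski metric η = diag(1, −1, −1); it coincides with its inverse, so `ηf`
is used both for lower and upper indices. -/
def ηf (a b : Fin 3) : ℝ := if a = b then (if a = (0 : Fin 3) then 1 else -1) else 0

/-- The 3×3 Lorentz generators of so(2,1): `(J3 a) b c = (J_a)^b{}_c = ε_{ac}{}^b`. -/
def J3 (a : Fin 3) : Matrix (Fin 3) (Fin 3) ℝ :=
  Matrix.of fun b c => ηf b b * eps a c b

/-- Embedding of a pair (3×3 matrix `u`, vector `x`) as the 4×4 matrix `[[u, x], [0, 0]]`. -/
def algEmb (u : Matrix (Fin 3) (Fin 3) ℝ) (x : Fin 3 → ℝ) : G :=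
  Matrix.of fun i j =>
    if hi : (i : ℕ) < 3 then
      if hj : (j : ℕ) < 3 then u ⟨i, hi⟩ ⟨j, hj⟩ else x ⟨i, hi⟩
    else 0

/-- The Lorentz generators `J_a` of iso(2,1), as 4×4 matrices. -/
def Jg (a : Fin 3) : G := algEmb (J3 a) 0

/-- The translation generators `P_a` of iso(2,1), as 4×4 matrices. -/
def Pg (a : Fin 3) : G := algEmb 0 (fun b => if b = a then 1 else 0)

/-- `iso(2,1)` = span{J₀, J₁, J₂, P₀, P₁, P₂} inside the 4×4 matrices. -/
def iso21 : Submodule ℝ G := Submodule.span ℝ (Set.range Jg ∪ Set.range Pg)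

/-- 𝔤 ⊗ 𝔤. -/
abbrev T2 : Type := TensorProduct ℝ G G

/-- `ad_x = [x, ·]` as a linear map. -/
def adL (x : G) : G →ₗ[ℝ] G := LinearMap.mulLeft ℝ x - LinearMap.mulRight ℝ x

/-- `ad_x ⊗ id + id ⊗ ad_x` acting factor-wise on 𝔤 ⊗ 𝔤. -/
def adT (x : G) : T2 →ₗ[ℝ] T2 :=
  TensorProduct.map (adL x) LinearMap.id + TensorProduct.map LinearMap.id (adL x)

/-- `x ∧ y = x ⊗ y − y ⊗ x` for `x, y ∈ 𝔤`. -/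
def wT (x y : G) : T2 := x ⊗ₜ[ℝ] y - y ⊗ₜ[ℝ] x

/-- The ad-invariant symmetric element `½(P_a ⊗ J^a + J^a ⊗ P_a)`. -/
def tHalf : T2 :=
  ∑ a : Fin 3, ∑ b : Fin 3, ((1 : ℝ) / 2 * ηf a b) • (Pg a ⊗ₜ[ℝ] Jg b + Jg b ⊗ₜ[ℝ] Pg a)

open Matrix

attribute [local instance] LieRing.ofAssociativeRing

/-! A coefficient matrix `K` turns two families of vectors `u`, `v` into the tensor
`∑ K_{bc} u_b ⊗ v_c`, and an element acting on both families through a matrix `X` sends `K` to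
`X K + K Xᵀ`. Here `J_a` acts on the families `J` and `P` through the same matrix `X = J3 a`, while
`P_a` maps `J` to `P` through `X` and kills `P`. On `∑ K_{bc} (P_b ⊗ J_c + J_b ⊗ P_c)` it therefore
produces the coefficient matrix `X K + K Xᵀ` again, now in front of `P_b ⊗ P_c`.

All three summands of `r` arise in this way from `K = η` or from `K = ω`, `ω_{bc} = ε_{0bc}`, the
area bivector of the spacelike plane in which `J₀` rotates; the infinitesimal rotation `J3 0`
preserves both. The coefficients built from `ψ` and `α` merely scale the three invariants. -/

section TensorOfMatrix

variable {R M N : Type*} [CommSemiring R] [AddCommMonoid M] [Module R M]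
  [AddCommMonoid N] [Module R N]
  {ι κ ι' κ' : Type*} [Fintype ι] [Fintype κ] [Fintype ι'] [Fintype κ']

/-- The tensor `∑ K_{ab} u_a ⊗ v_b` with coefficient matrix `K`, as a linear function of `K`. -/
def tensorOfMatrix (u : ι → M) (v : κ → N) : Matrix ι κ R →ₗ[R] M ⊗[R] N :=
  ∑ a, ∑ b, (entryLinearMap R R a b).smulRight (u a ⊗ₜ[R] v b)

theorem tensorOfMatrix_apply (u : ι → M) (v : κ → N) (K : Matrix ι κ R) :
    tensorOfMatrix u v K = ∑ a, ∑ b, K a b • u a ⊗ₜ[R] v b := by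
  simp [tensorOfMatrix, LinearMap.sum_apply]

theorem tensorOfMatrix_sum_smul_left (u : ι' → M) (v : κ → N) (A : Matrix ι' ι R)
    (K : Matrix ι κ R) :
    tensorOfMatrix (fun a => ∑ c, A c a • u c) v K = tensorOfMatrix u v (A * K) := by
  simp only [tensorOfMatrix_apply, mul_apply, TensorProduct.sum_tmul, TensorProduct.smul_tmul',
    Finset.smul_sum, Finset.sum_smul, smul_smul]
  calc
    _ = ∑ a, ∑ c, ∑ b, (K a b * A c a) • u c ⊗ₜ[R] v b :=
      Finset.sum_congr rfl fun a _ => Finset.sum_comm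
    _ = ∑ c, ∑ a, ∑ b, (K a b * A c a) • u c ⊗ₜ[R] v b := Finset.sum_comm
    _ = _ := Finset.sum_congr rfl fun c _ => by
      simp only [mul_comm]
      exact Finset.sum_comm

theorem tensorOfMatrix_sum_smul_right (u : ι → M) (v : κ' → N) (B : Matrix κ' κ R)
    (K : Matrix ι κ R) :
    tensorOfMatrix u (fun b => ∑ c, B c b • v c) K = tensorOfMatrix u v (K * Bᵀ) := by
  simp only [tensorOfMatrix_apply, mul_apply, transpose_apply, TensorProduct.tmul_sum,
    TensorProduct.tmul_smul, Finset.smul_sum, Finset.sum_smul, smul_smul]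
  exact Finset.sum_congr rfl fun a _ => Finset.sum_comm

/-- The sum of `∑ K_{ab} u_a ⊗ v_b` and `∑ K_{ab} v_a ⊗ u_b`, as a linear function of `K`. For
`u = P` and `v = J`, the two mixed summands of `r` are multiples of its values at `K = η` and at
`K_{ab} = ε_{0ab}`. -/
def mixedTensor (u v : ι → M) : Matrix ι ι R →ₗ[R] M ⊗[R] M :=
  tensorOfMatrix u v + tensorOfMatrix v u

end TensorOfMatrix

section LieModule

variable {R L M N : Type*} [CommRing R] [LieRing L] [LieAlgebra R L]
  [AddCommGroup M] [Module R M] [LieRingModule L M] [LieModule R L M]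
  [AddCommGroup N] [Module R N] [LieRingModule L N] [LieModule R L N]
  {ι κ : Type*} [Fintype ι] [Fintype κ]

theorem lie_eq_zero_of_mem_span {s : Set L} {m : M} (hs : ∀ y ∈ s, ⁅y, m⁆ = 0) {x : L}
    (hx : x ∈ Submodule.span R s) : ⁅x, m⁆ = 0 := by
  induction hx using Submodule.span_induction with
  | mem y hy => exact hs y hy
  | zero => exact zero_lie m
  | add y z _ _ hy hz => rw [add_lie, hy, hz, add_zero]
  | smul c y _ hy => rw [smul_lie, hy, smul_zero]

theorem lie_tensorOfMatrix (x : L) (u : ι → M) (v : κ → N) (K : Matrix ι κ R) :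
    ⁅x, tensorOfMatrix u v K⁆ =
      tensorOfMatrix (fun a => ⁅x, u a⁆) v K + tensorOfMatrix u (fun b => ⁅x, v b⁆) K := by
  simp only [tensorOfMatrix_apply, lie_sum, lie_smul, TensorProduct.LieModule.lie_tmul_right,
    smul_add, Finset.sum_add_distrib]

theorem lie_tensorOfMatrix_eq_zero {x : L} {u : ι → M} {v : κ → N} {A : Matrix ι ι R}
    {B : Matrix κ κ R} {K : Matrix ι κ R} (hu : ∀ a, ⁅x, u a⁆ = ∑ c, A c a • u c)
    (hv : ∀ b, ⁅x, v b⁆ = ∑ c, B c b • v c) (hK : A * K + K * Bᵀ = 0) :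
    ⁅x, tensorOfMatrix u v K⁆ = 0 := by
  simp only [lie_tensorOfMatrix, hu, hv, tensorOfMatrix_sum_smul_left,
    tensorOfMatrix_sum_smul_right, ← map_add, hK, map_zero]

theorem lie_mixedTensor_eq_zero {x : L} {u v : ι → M} {A K : Matrix ι ι R}
    (hu : ∀ a, ⁅x, u a⁆ = ∑ c, A c a • u c) (hv : ∀ a, ⁅x, v a⁆ = ∑ c, A c a • v c)
    (hK : A * K + K * Aᵀ = 0) : ⁅x, mixedTensor u v K⁆ = 0 := by
  rw [mixedTensor, LinearMap.add_apply, lie_add, lie_tensorOfMatrix_eq_zero hu hv hK,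
    lie_tensorOfMatrix_eq_zero hv hu hK, add_zero]

theorem lie_mixedTensor_eq_zero_of_lie_left_eq_zero {x : L} {u v : ι → M} {A K : Matrix ι ι R}
    (hu : ∀ a, ⁅x, u a⁆ = 0) (hv : ∀ a, ⁅x, v a⁆ = ∑ c, A c a • u c)
    (hK : A * K + K * Aᵀ = 0) : ⁅x, mixedTensor u v K⁆ = 0 := by
  have lie_uv : ⁅x, tensorOfMatrix u v K⁆ = tensorOfMatrix u u (K * Aᵀ) := by
    simp only [lie_tensorOfMatrix, hu, hv, tensorOfMatrix_sum_smul_right]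
    simp [tensorOfMatrix_apply]
  have lie_vu : ⁅x, tensorOfMatrix v u K⁆ = tensorOfMatrix u u (A * K) := by
    simp only [lie_tensorOfMatrix, hu, hv, tensorOfMatrix_sum_smul_left]
    simp [tensorOfMatrix_apply]
  rw [mixedTensor, LinearMap.add_apply, lie_add, lie_uv, lie_vu, ← map_add, add_comm, hK, map_zero]

end LieModule

section AffineEmbedding

theorem algEmb_sub (u v : Matrix (Fin 3) (Fin 3) ℝ) (x y : Fin 3 → ℝ) :
    algEmb u x - algEmb v y = algEmb (u - v) (x - y) := by
  ext i j
  simp only [algEmb, Matrix.sub_apply, of_apply]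
  split_ifs <;> simp

theorem algEmb_mul (u v : Matrix (Fin 3) (Fin 3) ℝ) (x y : Fin 3 → ℝ) :
    algEmb u x * algEmb v y = algEmb (u * v) (u *ᵥ y) := by
  ext i j
  fin_cases i <;> fin_cases j <;>
    simp [algEmb, mul_apply, Fin.sum_univ_succ, mulVec, dotProduct]

theorem lie_algEmb (u v : Matrix (Fin 3) (Fin 3) ℝ) (x y : Fin 3 → ℝ) :
    ⁅algEmb u x, algEmb v y⁆ = algEmb ⁅u, v⁆ (u *ᵥ y - v *ᵥ x) := by
  simp only [Ring.lie_def, algEmb_mul, algEmb_sub]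

theorem sum_smul_algEmb {ι : Type*} [Fintype ι] (c : ι → ℝ)
    (u : ι → Matrix (Fin 3) (Fin 3) ℝ) (x : ι → Fin 3 → ℝ) :
    ∑ k, c k • algEmb (u k) (x k) = algEmb (∑ k, c k • u k) (∑ k, c k • x k) := by
  ext i j
  simp only [Matrix.sum_apply, Matrix.smul_apply, algEmb, of_apply]
  split_ifs <;> simp

end AffineEmbedding

section StructureConstants

theorem eps_swap_left (a b c : Fin 3) : eps b a c = -eps a b c := by
  simp only [eps]
  ring

theorem eps_swap_right (a b c : Fin 3) : eps a c b = -eps a b c := by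
  simp only [eps]
  ring

theorem J3_apply_swap (a b c : Fin 3) : J3 b c a = -J3 a c b := by
  simp [J3, eps_swap_left a b c]

theorem J3_zero : J3 0 = !![0, 0, 0; 0, 0, 1; 0, -1, 0] := by
  ext i j
  fin_cases i <;> fin_cases j <;> norm_num [J3, eps, ηf]

theorem J3_one : J3 1 = !![0, 0, 1; 0, 0, 0; 1, 0, 0] := by
  ext i j
  fin_cases i <;> fin_cases j <;> norm_num [J3, eps, ηf]

theorem J3_two : J3 2 = !![0, -1, 0; -1, 0, 0; 0, 0, 0] := by
  ext i j
  fin_cases i <;> fin_cases j <;> norm_num [J3, eps, ηf]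

theorem lie_J3 (a b : Fin 3) : ⁅J3 a, J3 b⁆ = ∑ c, J3 a c b • J3 c := by
  rw [Fin.sum_univ_three]
  fin_cases a <;> fin_cases b <;>
    simp [Ring.lie_def, J3_zero, J3_one, J3_two, funext_iff, Fin.forall_fin_succ]

theorem lie_Jg_Jg (a b : Fin 3) : ⁅Jg a, Jg b⁆ = ∑ c, J3 a c b • Jg c := by
  simp [Jg, lie_algEmb, sum_smul_algEmb, lie_J3]

theorem lie_Jg_Pg (a b : Fin 3) : ⁅Jg a, Pg b⁆ = ∑ c, J3 a c b • Pg c := by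
  have column_eq : (J3 a *ᵥ fun i => if i = b then 1 else 0) =
      ∑ c, J3 a c b • fun i => if i = c then (1 : ℝ) else 0 := by
    ext i
    simp [mulVec, dotProduct]
  simp [Jg, Pg, lie_algEmb, sum_smul_algEmb, column_eq]

theorem lie_Pg_Jg (a b : Fin 3) : ⁅Pg a, Jg b⁆ = ∑ c, J3 a c b • Pg c := by
  rw [← lie_skew, lie_Jg_Pg, ← Finset.sum_neg_distrib]
  simp only [J3_apply_swap a b, neg_smul, neg_neg]

theorem lie_Pg_Pg (a b : Fin 3) : ⁅Pg a, Pg b⁆ = 0 := by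
  simp only [Pg, lie_algEmb, lie_self, zero_mulVec, sub_self]
  ext i j
  simp [algEmb]

end StructureConstants

section InvariantTensors

theorem ηf_comm (a b : Fin 3) : ηf a b = ηf b a := by
  by_cases h : a = b <;> simp [h, ηf, eq_comm]

theorem of_ηf_eq_diagonal : of ηf = diagonal fun a => ηf a a := by
  ext a b
  by_cases h : a = b <;> simp [h, ηf]

theorem J3_eq_neg_ηf_mul_eps (a : Fin 3) : J3 a = -(of ηf * of (eps a)) := by
  ext b c
  simp [of_ηf_eq_diagonal, J3, eps_swap_right a b c]

theorem J3_mul_ηf_add_ηf_mul_transpose (a : Fin 3) :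
    J3 a * of ηf + of ηf * (J3 a)ᵀ = 0 := by
  ext b c
  simp only [Matrix.add_apply, of_ηf_eq_diagonal, mul_diagonal, diagonal_mul, transpose_apply, J3,
    of_apply, eps_swap_right a b c, Matrix.zero_apply]
  ring

theorem J3_mul_eps_add_eps_mul_transpose (a : Fin 3) :
    J3 a * of (eps a) + of (eps a) * (J3 a)ᵀ = 0 := by
  have eps_transpose : (of (eps a))ᵀ = -of (eps a) := by
    ext b c
    simp [eps_swap_right a b c]
  have ηf_transpose : (of ηf)ᵀ = of ηf := by
    ext b c
    exact ηf_comm c b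
  have commute_sq : of ηf * (of (eps a) * of (eps a)) = of (eps a) * of (eps a) * of ηf := by
    ext b c
    simp only [of_ηf_eq_diagonal, diagonal_mul, mul_diagonal]
    fin_cases a <;> fin_cases b <;> fin_cases c <;>
      norm_num [mul_apply, Fin.sum_univ_three, eps, ηf]
  have J3_transpose : (J3 a)ᵀ = of (eps a) * of ηf := by
    rw [J3_eq_neg_ηf_mul_eps, transpose_neg, transpose_mul, eps_transpose, ηf_transpose,
      Matrix.neg_mul, neg_neg]
  rw [J3_transpose, J3_eq_neg_ηf_mul_eps, Matrix.neg_mul, Matrix.mul_assoc, commute_sq,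
    Matrix.mul_assoc, neg_add_cancel]

theorem adT_apply (x : G) (t : T2) : adT x t = ⁅x, t⁆ := by
  induction t using TensorProduct.induction_on with
  | zero => simp
  | tmul y z => simp [adT, adL, Ring.lie_def]
  | add s t hs ht => rw [map_add, lie_add, hs, ht]

theorem adT_mixedTensor_Pg_Jg_eq_zero {a : Fin 3} {K : Matrix (Fin 3) (Fin 3) ℝ}
    (hK : J3 a * K + K * (J3 a)ᵀ = 0) {x : G} (hx : x ∈ Submodule.span ℝ {Jg a, Pg a}) :
    adT x (mixedTensor Pg Jg K) = 0 := by
  rw [adT_apply]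
  refine lie_eq_zero_of_mem_span ?_ hx
  rintro y (rfl | rfl)
  · exact lie_mixedTensor_eq_zero (lie_Jg_Pg a) (lie_Jg_Jg a) hK
  · exact lie_mixedTensor_eq_zero_of_lie_left_eq_zero (lie_Pg_Pg a) (lie_Pg_Jg a) hK

theorem adT_tensorOfMatrix_Pg_Pg_eq_zero {a : Fin 3} {K : Matrix (Fin 3) (Fin 3) ℝ}
    (hK : J3 a * K + K * (J3 a)ᵀ = 0) {x : G} (hx : x ∈ Submodule.span ℝ {Jg a, Pg a}) :
    adT x (tensorOfMatrix Pg Pg K) = 0 := by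
  rw [adT_apply]
  refine lie_eq_zero_of_mem_span ?_ hx
  rintro y (rfl | rfl)
  · exact lie_tensorOfMatrix_eq_zero (lie_Jg_Pg a) (lie_Jg_Pg a) hK
  · have lie_Pg : ∀ b, ⁅Pg a, Pg b⁆ = ∑ c, (0 : Matrix (Fin 3) (Fin 3) ℝ) c b • Pg c := by
      simp [lie_Pg_Pg]
    exact lie_tensorOfMatrix_eq_zero lie_Pg lie_Pg (by simp)

theorem tHalf_eq_mixedTensor : tHalf = (1 / 2 : ℝ) • mixedTensor Pg Jg (of ηf) := by
  have swapped_sum : ∑ a, ∑ b, ηf a b • Jg b ⊗ₜ[ℝ] Pg a = tensorOfMatrix Jg Pg (of ηf) := by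
    rw [tensorOfMatrix_apply, Finset.sum_comm]
    simp only [ηf_comm, of_apply]
  simp only [tHalf, mul_smul, smul_add, Finset.sum_add_distrib, ← Finset.smul_sum, swapped_sum,
    mixedTensor, LinearMap.add_apply, tensorOfMatrix_apply, of_apply]

theorem tensorOfMatrix_eps_zero {M N : Type*} [AddCommGroup M] [Module ℝ M] [AddCommGroup N]
    [Module ℝ N] (u : Fin 3 → M) (v : Fin 3 → N) :
    tensorOfMatrix u v (of (eps 0)) = u 1 ⊗ₜ[ℝ] v 2 - u 2 ⊗ₜ[ℝ] v 1 := by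
  norm_num [tensorOfMatrix_apply, Fin.sum_univ_three, eps, sub_eq_add_neg]

theorem wT_Pg_Jg_sub_wT_Pg_Jg_eq_mixedTensor :
    wT (Pg 1) (Jg 2) - wT (Pg 2) (Jg 1) = mixedTensor Pg Jg (of (eps 0)) := by
  simp only [wT, mixedTensor, LinearMap.add_apply, tensorOfMatrix_eps_zero]
  abel

theorem wT_Pg_Pg_eq_tensorOfMatrix : wT (Pg 1) (Pg 2) = tensorOfMatrix Pg Pg (of (eps 0)) :=
  (tensorOfMatrix_eps_zero Pg Pg).symm

end InvariantTensors

/-- For all ψ, α ∈ ℝ with cos(ψ/2) ≠ 0, the element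
`r(ψ,α) = ½(P_a ⊗ J^a + J^a ⊗ P_a) + ½ tan(ψ/2)(P₁ ∧ J₂ − P₂ ∧ J₁)
          + (α / (4 cos²(ψ/2))) P₁ ∧ P₂`
of iso(2,1) ⊗ iso(2,1) is invariant under the Cartan subalgebra 𝔥₁ = span{J₀, P₀}:
`(ad_x ⊗ id + id ⊗ ad_x)(r(ψ,α)) = 0` for every `x ∈ 𝔥₁`. -/
theorem stmt9 (ψ α : ℝ) (h : Real.cos (ψ / 2) ≠ 0) :
    ∀ x ∈ Submodule.span ℝ ({Jg 0, Pg 0} : Set G),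
      adT x (tHalf
        + (Real.tan (ψ / 2) / 2) • (wT (Pg 1) (Jg 2) - wT (Pg 2) (Jg 1))
        + (α / (4 * Real.cos (ψ / 2) ^ 2)) • wT (Pg 1) (Pg 2)) = 0 := by
  intro x hx
  rw [tHalf_eq_mixedTensor, wT_Pg_Jg_sub_wT_Pg_Jg_eq_mixedTensor,
    wT_Pg_Pg_eq_tensorOfMatrix]
  simp only [map_add, map_smul,
    adT_mixedTensor_Pg_Jg_eq_zero (J3_mul_ηf_add_ηf_mul_transpose 0) hx,
    adT_mixedTensor_Pg_Jg_eq_zero (J3_mul_eps_add_eps_mul_transpose 0) hx,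
    adT_tensorOfMatrix_Pg_Pg_eq_zero (J3_mul_eps_add_eps_mul_transpose 0) hx, smul_zero, add_zero]
end
end

section
/- The Cartan subalgebras 𝔥₁ = span{J₀, P₀} and 𝔥₂ = span{J₁, P₁} of iso(2,1) are not conjugate: there is no g ∈ ISO(2,1) with Ad(g)(𝔥₁) = 𝔥₂. -/
noncomputable section

open scoped TensorProduct

/-- The Minkowski metric as a 3×3 matrix. -/
def ηm : Matrix (Fin 3) (Fin 3) ℝ := Matrix.of fun a b => ηf a b

/-- The full Lorentz group in three dimensions: {v | vᵀ η v = η}. -/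
def LorentzSet : Set (Matrix (Fin 3) (Fin 3) ℝ) := {v | v.transpose * ηm * v = ηm}

theorem one_mem_LorentzSet : (1 : Matrix (Fin 3) (Fin 3) ℝ) ∈ LorentzSet := by
  simp [LorentzSet]

/-- The proper orthochronous Lorentz group SO⁺(2,1): the identity component of
the Lorentz group {v | vᵀ η v = η}. -/
def SOplus : Set (Matrix (Fin 3) (Fin 3) ℝ) :=
  Subtype.val '' connectedComponent (⟨1, one_mem_LorentzSet⟩ : LorentzSet)

/-- Embedding of a pair (3×3 matrix `u`, vector `a`) as the 4×4 matrix `[[u, a], [0, 1]]`. -/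
def grpEmb (u : Matrix (Fin 3) (Fin 3) ℝ) (a : Fin 3 → ℝ) : G :=
  Matrix.of fun i j =>
    if hi : (i : ℕ) < 3 then
      if hj : (j : ℕ) < 3 then u ⟨i, hi⟩ ⟨j, hj⟩ else a ⟨i, hi⟩
    else if (j : ℕ) < 3 then 0 else 1

/-- The Poincaré group ISO(2,1) = SO⁺(2,1) ⋉ ℝ³, realized as 4×4 matrices `[[u, a], [0, 1]]`. -/
def ISOgrp : Set G := {M | ∃ u ∈ SOplus, ∃ a : Fin 3 → ℝ, M = grpEmb u a}

/-- The adjoint action `Ad(g) : x ↦ g x g⁻¹` as a linear map on the ambient matrix algebra. -/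
def conjLin (g : G) : G →ₗ[ℝ] G :=
  (LinearMap.mulLeft ℝ g).comp (LinearMap.mulRight ℝ g⁻¹)

/- The trace form `(X, Y) ↦ tr (X * Y)` is invariant under conjugation, and on the span of `J_c` and
`P_c` it is `a * J_c + b * P_c ↦ -2 * η_cc * a ^ 2`.  So `tr (X ^ 2) ≤ 0` throughout
`span {J₀, P₀}`, whereas `tr (J_c ^ 2) = 2` for `c ≠ 0`. -/

open Matrix

theorem ηm_mul_ηm : ηm * ηm = 1 := by
  ext a b
  fin_cases a <;> fin_cases b <;> simp [mul_apply, ηm, ηf]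

theorem isUnit_of_mem_LorentzSet {v : Matrix (Fin 3) (Fin 3) ℝ} (hv : v ∈ LorentzSet) :
    IsUnit v := by
  have hv' : vᵀ * ηm * v = ηm := hv
  have hinv : ηm * vᵀ * ηm * v = 1 := by
    rw [mul_assoc, mul_assoc, ← mul_assoc vᵀ, hv', ηm_mul_ηm]
  exact .of_mul_eq_one_right _ hinv

theorem SOplus_subset_LorentzSet : SOplus ⊆ LorentzSet :=
  Subtype.coe_image_subset _ _

theorem trace_fromBlocks {m n R : Type*} [Fintype m] [Fintype n] [AddCommMonoid R]
    (A : Matrix m m R) (B : Matrix m n R) (C : Matrix n m R) (D : Matrix n n R) :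
    (fromBlocks A B C D).trace = A.trace + D.trace := by
  simp [trace, Fintype.sum_sum_type]

section BlockMatrices

/-- The identification of block matrices `[[u, x], [y, r]]` having diagonal blocks of sizes 3 and 1
with 4×4 matrices, through which `algEmb` and `grpEmb` become `Matrix.fromBlocks`. -/
def blockEquiv : Matrix (Fin 3 ⊕ Fin 1) (Fin 3 ⊕ Fin 1) ℝ ≃ₐ[ℝ] G :=
  reindexAlgEquiv ℝ ℝ finSumFinEquiv

theorem det_blockEquiv (M : Matrix (Fin 3 ⊕ Fin 1) (Fin 3 ⊕ Fin 1) ℝ) :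
    (blockEquiv M).det = M.det :=
  det_reindexAlgEquiv ℝ ℝ finSumFinEquiv M

theorem trace_blockEquiv (M : Matrix (Fin 3 ⊕ Fin 1) (Fin 3 ⊕ Fin 1) ℝ) :
    (blockEquiv M).trace = M.trace :=
  finSumFinEquiv.symm.sum_comp M.diag

variable (u v : Matrix (Fin 3) (Fin 3) ℝ) (x y : Fin 3 → ℝ)

theorem grpEmb_eq_blockEquiv :
    grpEmb u x = blockEquiv (fromBlocks u (replicateCol (Fin 1) x) 0 1) := by
  ext i j
  fin_cases i <;> fin_cases j <;> rfl

theorem algEmb_eq_blockEquiv :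
    algEmb u x = blockEquiv (fromBlocks u (replicateCol (Fin 1) x) 0 0) := by
  ext i j
  fin_cases i <;> fin_cases j <;> rfl

theorem det_grpEmb : (grpEmb u x).det = u.det := by
  rw [grpEmb_eq_blockEquiv, det_blockEquiv, det_fromBlocks_zero₂₁, det_one, mul_one]

theorem trace_algEmb : (algEmb u x).trace = u.trace := by
  rw [algEmb_eq_blockEquiv, trace_blockEquiv, trace_fromBlocks, trace_zero, add_zero]

theorem algEmb_mul_algEmb : algEmb u x * algEmb v y = algEmb (u * v) (u *ᵥ y) := by
  simp only [algEmb_eq_blockEquiv, ← map_mul, fromBlocks_multiply, replicateCol_mulVec,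
    Matrix.mul_zero, Matrix.zero_mul, add_zero]

theorem trace_algEmb_mul_algEmb : (algEmb u x * algEmb v y).trace = (u * v).trace := by
  rw [algEmb_mul_algEmb, trace_algEmb]

end BlockMatrices

theorem isUnit_of_mem_ISOgrp {g : G} (hg : g ∈ ISOgrp) : IsUnit g := by
  obtain ⟨u, hu, x, rfl⟩ := hg
  rw [isUnit_iff_isUnit_det, det_grpEmb, ← isUnit_iff_isUnit_det]
  exact isUnit_of_mem_LorentzSet (SOplus_subset_LorentzSet hu)

theorem conjLin_apply (g X : G) : conjLin g X = g * X * g⁻¹ :=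
  (mul_assoc g X g⁻¹).symm

theorem conjLin_mul {g : G} (hg : IsUnit g) (X Y : G) :
    conjLin g (X * Y) = conjLin g X * conjLin g Y := by
  have hdet : IsUnit g.det := (isUnit_iff_isUnit_det g).mp hg
  simp only [conjLin_apply, mul_assoc, nonsing_inv_mul_cancel_left _ _ hdet]

theorem trace_conjLin_mul_conjLin {g : G} (hg : IsUnit g) (X Y : G) :
    (conjLin g X * conjLin g Y).trace = (X * Y).trace := by
  rw [← conjLin_mul hg, conjLin_apply, trace_conj hg]

theorem trace_J3_mul_J3 (a b : Fin 3) : (J3 a * J3 b).trace = -2 * ηf a b := by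
  fin_cases a <;> fin_cases b <;>
    simp [trace_fin_three, mul_apply, Fin.sum_univ_three, J3, ηf, eps] <;> norm_num

theorem trace_Jg_mul_Jg (a b : Fin 3) : (Jg a * Jg b).trace = -2 * ηf a b := by
  rw [Jg, Jg, trace_algEmb_mul_algEmb, trace_J3_mul_J3]

theorem trace_algEmb_mul_Pg (u : Matrix (Fin 3) (Fin 3) ℝ) (x : Fin 3 → ℝ) (c : Fin 3) :
    (algEmb u x * Pg c).trace = 0 := by
  rw [Pg, trace_algEmb_mul_algEmb, Matrix.mul_zero, trace_zero]

theorem trace_mul_self_smul_Jg_add_smul_Pg (c : Fin 3) (a b : ℝ) :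
    ((a • Jg c + b • Pg c) * (a • Jg c + b • Pg c)).trace = -2 * ηf c c * a ^ 2 := by
  have hJP : (Jg c * Pg c).trace = 0 := trace_algEmb_mul_Pg _ _ c
  have hPJ : (Pg c * Jg c).trace = 0 := (trace_mul_comm _ _).trans hJP
  have hPP : (Pg c * Pg c).trace = 0 := trace_algEmb_mul_Pg _ _ c
  simp only [add_mul, mul_add, smul_mul_smul_comm, trace_add, trace_smul, trace_Jg_mul_Jg, hJP,
    hPJ, hPP, smul_eq_mul]
  ring

theorem trace_mul_self_nonpos_of_mem_span_Jg_Pg_zero {X : G}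
    (hX : X ∈ Submodule.span ℝ ({Jg 0, Pg 0} : Set G)) : (X * X).trace ≤ 0 := by
  obtain ⟨a, b, rfl⟩ := Submodule.mem_span_pair.mp hX
  have hη : ηf 0 0 = 1 := by simp [ηf]
  rw [trace_mul_self_smul_Jg_add_smul_Pg, hη]
  linarith [sq_nonneg a]

theorem Jg_notMem_map_conjLin {g : G} (hg : IsUnit g) {c : Fin 3} (hc : c ≠ 0) :
    Jg c ∉ Submodule.map (conjLin g) (Submodule.span ℝ ({Jg 0, Pg 0} : Set G)) := by
  rintro ⟨X, hX, hXJ⟩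
  have hη : ηf c c = -1 := by simp [ηf, hc]
  have htrace : (X * X).trace = 2 := by
    rw [← trace_conjLin_mul_conjLin hg, hXJ, trace_Jg_mul_Jg, hη]
    norm_num
  linarith [trace_mul_self_nonpos_of_mem_span_Jg_Pg_zero hX]

theorem stmt13_general {c : Fin 3} (hc : c ≠ 0) :
    ¬ ∃ g : G, IsUnit g ∧
        Submodule.map (conjLin g) (Submodule.span ℝ ({Jg 0, Pg 0} : Set G)) =
          Submodule.span ℝ ({Jg c, Pg c} : Set G) := by
  rintro ⟨g, hg, hmap⟩
  apply Jg_notMem_map_conjLin hg hc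
  rw [hmap]
  exact Submodule.mem_span_of_mem (Set.mem_insert _ _)

/-- The Cartan subalgebras 𝔥₁ = span{J₀, P₀} and 𝔥₂ = span{J₁, P₁} of
iso(2,1) are not conjugate: there is no g ∈ ISO(2,1) with Ad(g)(𝔥₁) = 𝔥₂. -/
theorem stmt13 :
    ¬ ∃ g ∈ ISOgrp,
        Submodule.map (conjLin g) (Submodule.span ℝ ({Jg 0, Pg 0} : Set G)) =
          Submodule.span ℝ ({Jg 1, Pg 1} : Set G) :=
  fun ⟨_, hg, hmap⟩ => stmt13_general one_ne_zero ⟨_, isUnit_of_mem_ISOgrp hg, hmap⟩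
end
end
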